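/- arXiv:1402.0156 — 2 statements merged into one kernel-verified Lean document; each statement's English description precedes it below -/
import Mathlib

section
/- For any nonempty set S ⊆ G and any x ∈ S, the harmonic measure from stationarity is bounded below by h_S(x) ≥ π(x) · E_x[ |{X_0, X_1, …, X_{T_S^+ − 1}}| ], the expected number of distinct states visited before the return time to S. -/
open MeasureTheory Finset
open scoped ENNReal

namespace HM

variable {G : Type*} [Fintype G] [DecidableEq G]

/-- `P` is a stochastic (transition) matrix. -/
def IsStochastic (P : Matrix G G ℝ) : Prop :=
  (∀ x y, 0 ≤ P x y) ∧ ∀ x, ∑ y, P x y = 1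

/-- Irreducibility: every state reaches every other state. -/
def IsIrreducible (P : Matrix G G ℝ) : Prop :=
  ∀ x y : G, ∃ t : ℕ, 0 < (P ^ t) x y

/-- Aperiodicity: the gcd of return times is `1` at every state. -/
def IsAperiodic (P : Matrix G G ℝ) : Prop :=
  ∀ x : G, ∀ d : ℕ, (∀ t : ℕ, 0 < (P ^ t) x x → d ∣ t) → d = 1

/-- `P` is reversible with respect to the full-support probability vector `pi`. -/
def IsReversible (P : Matrix G G ℝ) (pi : G → ℝ) : Prop :=
  (∀ x, 0 < pi x) ∧ (∑ x, pi x = 1) ∧ ∀ x y, pi x * P x y = pi y * P y x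

variable [MeasurableSpace G]

/-- `μ x` is the law of the Markov chain with transition matrix `P` started at `x`:
all finite-dimensional (cylinder) probabilities are given by products of transition
probabilities. -/
def IsMarkovChain (P : Matrix G G ℝ) (μ : G → Measure (ℕ → G)) : Prop :=
  (∀ x, IsProbabilityMeasure (μ x)) ∧
  ∀ (x : G) (t : ℕ) (w : ℕ → G),
    μ x {ω | ∀ i ≤ t, ω i = w i} =
      ENNReal.ofReal ((if w 0 = x then 1 else 0) * ∏ i ∈ Finset.range t, P (w i) (w (i + 1)))

/-- Hitting time `T_S = inf {t ≥ 0 : X_t ∈ S}`, with value `⊤` if `S` is never hit. -/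
noncomputable def hit (S : Set G) (ω : ℕ → G) : ℕ∞ :=
  sInf ((↑) '' {n : ℕ | ω n ∈ S})

/-- Return time `T_S^+ = inf {t ≥ 1 : X_t ∈ S}`, with value `⊤` if `S` is never hit. -/
noncomputable def hitPlus (S : Set G) (ω : ℕ → G) : ℕ∞ :=
  sInf ((↑) '' {n : ℕ | 1 ≤ n ∧ ω n ∈ S})

/-- The event `X_{T_S} = x` (in particular `T_S < ∞`). -/
def hitsAt (S : Set G) (x : G) : Set (ℕ → G) :=
  {ω | ∃ n : ℕ, hit S ω = (n : ℕ∞) ∧ ω n = x}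

/-- Harmonic measure on `S` from `y`: `h_{y,S}(x) = Pr_y[X_{T_S} = x]`. -/
noncomputable def harm (μ : G → Measure (ℕ → G)) (S : Set G) (y x : G) : ℝ :=
  (μ y (hitsAt S x)).toReal

/-- Harmonic measure on `S` from the stationary distribution:
`h_S(x) = ∑_y π(y) h_{y,S}(x)`. -/
noncomputable def harmStat (pi : G → ℝ) (μ : G → Measure (ℕ → G)) (S : Set G) (x : G) : ℝ :=
  ∑ y, pi y * harm μ S y x

/-- `π(S) = ∑_{x ∈ S} π(x)`. -/
noncomputable def piOf (pi : G → ℝ) (S : Set G) : ℝ :=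
  ∑ x, S.indicator pi x

/-- `λ = max_{j > 1} |λ_j|`, via the variational characterization: the largest absolute
value of the quadratic form of `P` on the orthogonal complement of the constants in
`L²(π)`.  For a reversible chain this equals the largest absolute value of a
non-Perron eigenvalue of `P`. -/
noncomputable def lam (P : Matrix G G ℝ) (pi : G → ℝ) : ℝ :=
  sSup {r : ℝ | ∃ f : G → ℝ, ∑ x, pi x * f x = 0 ∧ ∑ x, pi x * f x ^ 2 = 1 ∧
    r = |∑ x, pi x * (f x * ∑ y, P x y * f y)|}

/-- `π_min = min_x π(x)`. -/
noncomputable def pimin (pi : G → ℝ) : ℝ := ⨅ x, pi x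

/-- `π_max = max_x π(x)`. -/
noncomputable def pimax (pi : G → ℝ) : ℝ := ⨆ x, pi x

/-- `u(P) = min_{x ≠ y} Pr_x[T_y < T_x^+]`. -/
noncomputable def uP (μ : G → Measure (ℕ → G)) : ℝ :=
  sInf {r : ℝ | ∃ x y : G, x ≠ y ∧
    r = (μ x {ω | hit {y} ω < hitPlus {x} ω}).toReal}

/-- `E_x[T_S^+]` (as an extended nonnegative real, then converted to `ℝ`). -/
noncomputable def expHitPlus (μ : G → Measure (ℕ → G)) (S : Set G) (x : G) : ℝ :=
  (∫⁻ ω, (hitPlus S ω : ℝ≥0∞) ∂ μ x).toReal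

/-- The number of distinct states visited strictly before the return time `T_S^+`,
i.e. `|{X_0, X_1, …, X_{T_S^+ − 1}}|`. -/
noncomputable def visited (S : Set G) (ω : ℕ → G) : ℕ :=
  Set.ncard {g : G | ∃ n : ℕ, (n : ℕ∞) < hitPlus S ω ∧ ω n = g}

/-!
Give the initial state the weights `π` and let `ℙ` be the law of the resulting trajectory. By
reversibility the first `n + 1` states have the same law under `ℙ` when read backwards. This
exchanges the event that the chain starts at `x` and has not returned to `S` by time `n` with the
event that it first hits `S` at time `n`, in `x`, so `π(x) Pr_x[T_S^+ > n] = ℙ[T_S = n, X_n = x]`.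
Summing over `n` gives the identity `π(x) E_x[T_S^+] = ℙ[X_{T_S} = x] = h_S(x)`, and the chain
visits at most `T_S^+` states before time `T_S^+`.
-/

section TailSum

lemma encard_setOf_natCast_lt (m : ℕ∞) : {n : ℕ | (n : ℕ∞) < m}.encard = m := by
  induction m with
  | top => simp
  | coe k =>
    have hset : {n : ℕ | (n : ℕ∞) < k} = (Finset.range k : Set ℕ) := by ext; simp
    rw [hset, Set.encard_coe_eq_coe_finsetCard, Finset.card_range]

lemma toENNReal_eq_tsum_indicator {Ω : Type*} (T : Ω → ℕ∞) (ω : Ω) :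
    (T ω : ℝ≥0∞) = ∑' n : ℕ, {ω | (n : ℕ∞) < T ω}.indicator 1 ω := by
  conv_lhs => rw [← encard_setOf_natCast_lt (T ω), ← ENNReal.tsum_set_one,
    _root_.tsum_subtype _ fun _ => (1 : ℝ≥0∞)]
  rfl

lemma lintegral_toENNReal_eq_tsum_measure_lt {Ω : Type*} [MeasurableSpace Ω] (ν : Measure Ω)
    {T : Ω → ℕ∞} (hT : ∀ n : ℕ, MeasurableSet {ω | (n : ℕ∞) < T ω}) :
    ∫⁻ ω, (T ω : ℝ≥0∞) ∂ν = ∑' n : ℕ, ν {ω | (n : ℕ∞) < T ω} := by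
  simp_rw [toENNReal_eq_tsum_indicator T]
  rw [lintegral_tsum fun n => (measurable_one.indicator (hT n)).aemeasurable]
  simp only [lintegral_indicator_one (hT _)]

end TailSum

section HittingTimes

variable {E : Type*} {S : Set E} {ω : ℕ → E}

lemma natCast_lt_hitPlus_iff {n : ℕ} :
    (n : ℕ∞) < hitPlus S ω ↔ ∀ i, 1 ≤ i → i ≤ n → ω i ∉ S := by
  simp only [hitPlus, ← ENat.add_one_le_iff (ENat.natCast_ne_top n), le_sInf_iff,
    Set.forall_mem_image]
  norm_cast
  exact ⟨fun h i hi hin hS => absurd (h ⟨hi, hS⟩) (by omega),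
    fun h i hi => not_le.1 fun hin => h i hi.1 hin hi.2⟩

lemma natCast_le_hit_iff {n : ℕ} : (n : ℕ∞) ≤ hit S ω ↔ ∀ i < n, ω i ∉ S := by
  simp only [hit, le_sInf_iff, Set.forall_mem_image, Nat.cast_le]
  exact ⟨fun h i hin hS => absurd (h hS) (by omega), fun h i hS => not_lt.1 fun hin => h i hin hS⟩

lemma hit_eq_natCast_iff {n : ℕ} (hn : ω n ∈ S) : hit S ω = n ↔ ∀ i < n, ω i ∉ S := by
  have hle : hit S ω ≤ n := sInf_le ⟨n, hn, rfl⟩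
  rw [← natCast_le_hit_iff, hle.ge_iff_eq]

lemma measurableSet_natCast_lt_hitPlus [MeasurableSpace E] [DiscreteMeasurableSpace E] (n : ℕ) :
    MeasurableSet {ω : ℕ → E | (n : ℕ∞) < hitPlus S ω} := by
  simp only [natCast_lt_hitPlus_iff, Set.ofPred_forall]
  exact .iInter fun i => .iInter fun _ => .iInter fun _ =>
    measurableSet_preimage (measurable_pi_apply (X := fun _ => E) i) (.of_discrete (s := Sᶜ))

/-- The set `{X_0, …, X_{T_S^+ - 1}}` of states visited before the return time to `S`, whose
`Set.ncard` is `visited S ω`. -/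
def visitedStates (S : Set E) (ω : ℕ → E) : Set E :=
  {g | ∃ n : ℕ, (n : ℕ∞) < hitPlus S ω ∧ ω n = g}

lemma encard_visitedStates_le_hitPlus (S : Set E) (ω : ℕ → E) :
    (visitedStates S ω).encard ≤ hitPlus S ω :=
  (Set.encard_image_le ω {n : ℕ | (n : ℕ∞) < hitPlus S ω}).trans_eq (encard_setOf_natCast_lt _)

lemma encard_visitedStates_eq_visited [Finite E] (S : Set E) (ω : ℕ → E) :
    (visitedStates S ω).encard = visited S ω :=
  (visitedStates S ω).toFinite.cast_ncard_eq.symm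

end HittingTimes

section Paths

variable {E : Type*} {n : ℕ}

/-- The initial segment `(X_0, …, X_n)` of a trajectory. -/
def initialPath (n : ℕ) (ω : ℕ → E) : Fin (n + 1) → E := fun i => ω i

/-- The trajectory that runs through `X_n, …, X_0`. Only its first `n + 1` entries matter: the
subtraction is truncated, so it stays at `X_0` afterwards. -/
def reverseFrom (n : ℕ) (ω : ℕ → E) : ℕ → E := fun i => ω (n - i)

lemma initialPath_eq_iff {ω w : ℕ → E} :
    initialPath n ω = initialPath n w ↔ ∀ i ≤ n, ω i = w i := by
  simp only [initialPath, funext_iff, Fin.forall_iff, Nat.lt_succ_iff]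

lemma initialPath_surjective : Function.Surjective (initialPath n : (ℕ → E) → Fin (n + 1) → E) :=
  fun w => ⟨fun i => w (Fin.ofNat (n + 1) i), by ext i; simp [initialPath]⟩

lemma initialPath_comp_reverseFrom_preimage_singleton (w : ℕ → E) :
    (initialPath n ∘ reverseFrom n) ⁻¹' {initialPath n w} =
      initialPath n ⁻¹' {initialPath n (reverseFrom n w)} := by
  ext ω
  simp only [Set.mem_preimage, Function.comp_apply, Set.mem_singleton_iff, initialPath_eq_iff,
    reverseFrom]
  constructor <;> intro h i hi <;>
    simpa only [Nat.sub_sub_self hi] using h (n - i) (Nat.sub_le n i)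

lemma mul_prod_reverseFrom {R : Type*} [CommSemiring R] {pi : E → R} {P : E → E → R}
    (hbal : ∀ y z, pi y * P y z = pi z * P z y) (w : ℕ → E) :
    pi (reverseFrom n w 0) *
        ∏ i ∈ Finset.range n, P (reverseFrom n w i) (reverseFrom n w (i + 1)) =
      pi (w 0) * ∏ i ∈ Finset.range n, P (w i) (w (i + 1)) := by
  simp only [reverseFrom, Nat.sub_zero]
  induction n with
  | zero => simp only [Finset.range_zero, Finset.prod_empty]
  | succ n ih =>
    rw [Finset.prod_range_succ', Finset.prod_range_succ, ← mul_assoc (pi (w 0)), ← ih]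
    simp only [Nat.add_sub_add_right, zero_add, Nat.sub_zero, Nat.add_sub_cancel]
    rw [mul_left_comm, hbal (w (n + 1))]
    ring

variable [MeasurableSpace E]

lemma measurable_initialPath : Measurable (initialPath n : (ℕ → E) → Fin (n + 1) → E) :=
  measurable_pi_lambda _ fun _ => measurable_pi_apply _

lemma measurable_reverseFrom : Measurable (reverseFrom n : (ℕ → E) → ℕ → E) :=
  measurable_pi_lambda _ fun _ => measurable_pi_apply _

end Paths

section Excursions

variable {E : Type*} {S : Set E} {n : ℕ} {x : E}

/-- The paths of length `n` that start at `x` and are outside `S` at every later time. -/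
def excursionPaths (S : Set E) (n : ℕ) (x : E) : Set (Fin (n + 1) → E) :=
  {p | p 0 = x ∧ ∀ i, i ≠ 0 → p i ∉ S}

lemma initialPath_mem_excursionPaths_iff {ω : ℕ → E} :
    initialPath n ω ∈ excursionPaths S n x ↔ ω 0 = x ∧ ∀ i, 1 ≤ i → i ≤ n → ω i ∉ S := by
  refine and_congr_right fun _ => ?_
  simp only [initialPath, Fin.forall_iff, Fin.ne_iff_vne, Nat.lt_succ_iff, Fin.val_zero,
    Nat.one_le_iff_ne_zero]
  exact forall_congr' fun i => forall_comm

lemma initialPath_preimage_excursionPaths :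
    initialPath n ⁻¹' excursionPaths S n x = {ω | ω 0 = x} ∩ {ω | (n : ℕ∞) < hitPlus S ω} := by
  ext ω
  simp only [Set.mem_preimage, Set.mem_inter_iff, initialPath_mem_excursionPaths_iff,
    Set.mem_ofPred_eq, natCast_lt_hitPlus_iff]

lemma initialPath_comp_reverseFrom_preimage_excursionPaths (hx : x ∈ S) :
    (initialPath n ∘ reverseFrom n) ⁻¹' excursionPaths S n x = {ω | hit S ω = n ∧ ω n = x} := by
  ext ω
  simp only [Set.mem_preimage, Function.comp_apply, initialPath_mem_excursionPaths_iff,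
    Set.mem_ofPred_eq, reverseFrom, Nat.sub_zero]
  rw [and_comm]
  refine and_congr_left fun hn => ?_
  rw [hit_eq_natCast_iff (hn ▸ hx)]
  refine ⟨fun h i hi => ?_, fun h i h1 hi => h (n - i) (by omega)⟩
  simpa only [Nat.sub_sub_self hi.le] using h (n - i) (by omega) (Nat.sub_le n i)

lemma measure_hitsAt_eq_tsum [Countable E] [MeasurableSpace E] [MeasurableSingletonClass E]
    (ν : Measure (ℕ → E)) (hx : x ∈ S) :
    ν (hitsAt S x) = ∑' n : ℕ, ν {ω | hit S ω = n ∧ ω n = x} := by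
  have hmeas (n : ℕ) : MeasurableSet {ω : ℕ → E | hit S ω = n ∧ ω n = x} := by
    rw [← initialPath_comp_reverseFrom_preimage_excursionPaths hx]
    exact (measurable_initialPath.comp measurable_reverseFrom) .of_discrete
  have hdisj : Pairwise (Function.onFun Disjoint
      fun n : ℕ => {ω : ℕ → E | hit S ω = n ∧ ω n = x}) := fun m n hmn =>
    Set.disjoint_left.2 fun ω hm hn => hmn (Nat.cast_injective (hm.1.symm.trans hn.1))
  rw [← measure_iUnion hdisj hmeas, hitsAt, Set.ofPred_exists]

end Excursions

section PathLaw

variable {E : Type*} [MeasurableSpace E]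

/-- The law of the trajectory when the initial state has (not necessarily normalized) weights
`pi`, and `μ y` is the law of the trajectory started at `y`. -/
noncomputable def pathLaw (pi : E → ℝ) (μ : E → Measure (ℕ → E)) : Measure (ℕ → E) :=
  Measure.sum fun y => ENNReal.ofReal (pi y) • μ y

lemma pathLaw_apply [Countable E] (pi : E → ℝ) (μ : E → Measure (ℕ → E)) (A : Set (ℕ → E)) :
    pathLaw pi μ A = ∑' y, ENNReal.ofReal (pi y) * μ y A := by
  simp only [pathLaw, Measure.sum_apply_of_countable, Measure.smul_apply, smul_eq_mul]

lemma ofReal_harmStat [Fintype E] {pi : E → ℝ} (hpi : ∀ y, 0 ≤ pi y) {μ : E → Measure (ℕ → E)}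
    [∀ y, IsFiniteMeasure (μ y)] (S : Set E) (x : E) :
    ENNReal.ofReal (harmStat pi μ S x) = pathLaw pi μ (hitsAt S x) := by
  simp only [pathLaw_apply, tsum_fintype, harmStat, harm]
  rw [ENNReal.ofReal_sum_of_nonneg fun y _ => mul_nonneg (hpi y) ENNReal.toReal_nonneg]
  simp only [ENNReal.ofReal_mul (hpi _), ENNReal.ofReal_toReal (measure_ne_top _ _)]

lemma toReal_le_harmStat [Fintype E] {pi : E → ℝ} (hpi : ∀ y, 0 ≤ pi y) {μ : E → Measure (ℕ → E)}
    [∀ y, IsFiniteMeasure (μ y)] {S : Set E} {x : E} {a : ℝ≥0∞}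
    (ha : a ≤ pathLaw pi μ (hitsAt S x)) : a.toReal ≤ harmStat pi μ S x := by
  have hnonneg : 0 ≤ harmStat pi μ S x :=
    Finset.sum_nonneg fun y _ => mul_nonneg (hpi y) ENNReal.toReal_nonneg
  exact ENNReal.toReal_le_of_le_ofReal hnonneg (ha.trans_eq (ofReal_harmStat hpi S x).symm)

end PathLaw

section MarkovChain

variable {E : Type*} [DecidableEq E] [MeasurableSpace E] {P : Matrix E E ℝ}
  {μ : E → Measure (ℕ → E)} {pi : E → ℝ}

lemma IsMarkovChain.pathLaw_cylinder [Countable E] (hμ : IsMarkovChain P μ)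
    (hpi : ∀ y, 0 ≤ pi y) (n : ℕ) (w : ℕ → E) :
    pathLaw pi μ (initialPath n ⁻¹' {initialPath n w}) =
      ENNReal.ofReal (pi (w 0) * ∏ i ∈ Finset.range n, P (w i) (w (i + 1))) := by
  simp only [Set.preimage, Set.mem_singleton_iff, initialPath_eq_iff]
  rw [pathLaw_apply, tsum_eq_single (w 0)]
  · rw [hμ.2, if_pos rfl, one_mul, ← ENNReal.ofReal_mul (hpi _)]
  · intro y hy
    rw [hμ.2, if_neg hy.symm, zero_mul, ENNReal.ofReal_zero, mul_zero]

variable [MeasurableSingletonClass E]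

lemma IsMarkovChain.ae_start_eq (hμ : IsMarkovChain P μ) (x : E) : ∀ᵐ ω ∂μ x, ω 0 = x := by
  have := hμ.1 x
  have hmeas : MeasurableSet {ω : ℕ → E | ω 0 = x} :=
    measurableSet_preimage (measurable_pi_apply (X := fun _ => E) 0) (measurableSet_singleton x)
  refine (mem_ae_iff_prob_eq_one hmeas).2 ?_
  simpa using hμ.2 x 0 fun _ => x

variable [Countable E]

lemma IsMarkovChain.pathLaw_start_inter (hμ : IsMarkovChain P μ) (x : E) (A : Set (ℕ → E)) :
    pathLaw pi μ ({ω | ω 0 = x} ∩ A) = ENNReal.ofReal (pi x) * μ x A := by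
  rw [pathLaw_apply, tsum_eq_single x,
    Measure.measure_inter_eq_of_ae (t := {ω : ℕ → E | ω 0 = x}) (hμ.ae_start_eq x)]
  intro y hy
  have hnull : μ y ({ω | ω 0 = x} ∩ A) = 0 := by
    rw [measure_eq_zero_iff_ae_notMem]
    filter_upwards [hμ.ae_start_eq y] with ω hω hωA
    exact hy (hω.symm.trans hωA.1)
  rw [hnull, mul_zero]

lemma IsMarkovChain.identDistrib_reverseFrom (hμ : IsMarkovChain P μ) (hpi : ∀ y, 0 ≤ pi y)
    (hbal : ∀ y z, pi y * P y z = pi z * P z y) (n : ℕ) :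
    ProbabilityTheory.IdentDistrib (initialPath n) (initialPath n ∘ reverseFrom n)
      (pathLaw pi μ) (pathLaw pi μ) where
  aemeasurable_fst := measurable_initialPath.aemeasurable
  aemeasurable_snd := (measurable_initialPath.comp measurable_reverseFrom).aemeasurable
  map_eq := Measure.ext_of_singleton fun p => by
    obtain ⟨w, rfl⟩ := initialPath_surjective p
    rw [Measure.map_apply measurable_initialPath (measurableSet_singleton _),
      Measure.map_apply (measurable_initialPath.comp measurable_reverseFrom)
        (measurableSet_singleton _),
      initialPath_comp_reverseFrom_preimage_singleton, hμ.pathLaw_cylinder hpi,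
      hμ.pathLaw_cylinder hpi, mul_prod_reverseFrom hbal]

end MarkovChain

section KacFormula

variable {E : Type*} [Countable E] [DecidableEq E] [MeasurableSpace E]
  [MeasurableSingletonClass E] {P : Matrix E E ℝ} {μ : E → Measure (ℕ → E)} {pi : E → ℝ}
  {S : Set E} {x : E}

lemma IsMarkovChain.ofReal_mul_measure_lt_hitPlus (hμ : IsMarkovChain P μ)
    (hpi : ∀ y, 0 ≤ pi y) (hbal : ∀ y z, pi y * P y z = pi z * P z y) (hx : x ∈ S) (n : ℕ) :
    ENNReal.ofReal (pi x) * μ x {ω | (n : ℕ∞) < hitPlus S ω} =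
      pathLaw pi μ {ω | hit S ω = n ∧ ω n = x} := by
  rw [← hμ.pathLaw_start_inter, ← initialPath_comp_reverseFrom_preimage_excursionPaths hx,
    ← (hμ.identDistrib_reverseFrom hpi hbal n).measure_mem_eq .of_discrete,
    initialPath_preimage_excursionPaths]

theorem IsMarkovChain.ofReal_mul_lintegral_hitPlus (hμ : IsMarkovChain P μ)
    (hpi : ∀ y, 0 ≤ pi y) (hbal : ∀ y z, pi y * P y z = pi z * P z y) (hx : x ∈ S) :
    ENNReal.ofReal (pi x) * ∫⁻ ω, (hitPlus S ω : ℝ≥0∞) ∂μ x = pathLaw pi μ (hitsAt S x) := by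
  rw [lintegral_toENNReal_eq_tsum_measure_lt (μ x) measurableSet_natCast_lt_hitPlus,
    ← ENNReal.tsum_mul_left, measure_hitsAt_eq_tsum _ hx]
  simp only [hμ.ofReal_mul_measure_lt_hitPlus hpi hbal hx]

theorem stmt10_general (hμ : IsMarkovChain P μ) (hpi : ∀ y, 0 ≤ pi y)
    (hbal : ∀ y z, pi y * P y z = pi z * P z y) (hx : x ∈ S) :
    ENNReal.ofReal (pi x) * ∫⁻ ω, ((visitedStates S ω).encard : ℝ≥0∞) ∂μ x ≤
      pathLaw pi μ (hitsAt S x) := by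
  rw [← hμ.ofReal_mul_lintegral_hitPlus hpi hbal hx]
  gcongr with ω
  exact encard_visitedStates_le_hitPlus S ω

end KacFormula

/-- Lower bound: for `x ∈ S`,
`h_S(x) ≥ π(x) · E_x[|{X_0, …, X_{T_S^+−1}}|]`. -/
theorem stmt10 {G : Type*} [Fintype G] [DecidableEq G] [MeasurableSpace G] [MeasurableSingletonClass G]
    (P : Matrix G G ℝ) (pi : G → ℝ) (μ : G → Measure (ℕ → G))
    (hP : IsStochastic P) (hirr : IsIrreducible P) (hap : IsAperiodic P)
    (hrev : IsReversible P pi) (hμ : IsMarkovChain P μ)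
    (S : Set G) (hS : S.Nonempty) (x : G) (hx : x ∈ S) :
    pi x * (∫⁻ ω, (visited S ω : ℝ≥0∞) ∂ μ x).toReal ≤ harmStat pi μ S x := by
  have := hμ.1
  have hpi y := (hrev.1 y).le
  simpa only [ENNReal.toReal_ofReal_mul _ _ (hpi x), encard_visitedStates_eq_visited,
    ENat.toENNReal_coe] using toReal_le_harmStat hpi (stmt10_general hμ hpi hrev.2.2 hx)

end HM
end

section
/- For any two disjoint nonempty sets A, B ⊆ G with π(A) < π(B), the probability, starting from the stationary distribution, that A is hit strictly before B satisfies Pr_π[T_A < T_B] ≤ (2/(1−λ)) · (π(A)/π(B)) · log(π(B)/π(A)) + π(A) + π(A)/π(B). -/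
open MeasureTheory Finset
open scoped ENNReal

namespace HM

variable {G : Type*} [Fintype G] [DecidableEq G]

variable [MeasurableSpace G]

/-!
In the first `s` steps a stationary chain meets `A` with probability at most `s π(A)`. If `A` is
hit before `B` but not within those steps, then `B` is avoided up to time `s`. The chain killed on
`B` contracts `L²(π)` by the factor `ρ = 1 - (1 - λ) π(B)`: for `g` vanishing on `B`,
`|⟪g, Pg⟫| ≤ λ ‖g‖² + (1 - λ) ⟪1, g⟫²`, and `⟪1, g⟫² ≤ (1 - π(B)) ‖g‖²` by Cauchy–Schwarz. So the
chain avoids `B` up to time `s` with probability at most `(1 - π(B)) ρ ^ s`, and `s` is chosen as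
the least integer not below `log (π(B) / π(A)) / ((1 - λ) π(B))`, so that
`ρ ^ s ≤ exp (-s (1 - λ) π(B)) ≤ π(A) / π(B)`.
-/

open RCLike
open scoped Matrix

section WeightedInner

variable {α : Type*} [Fintype α] {pi : α → ℝ}

lemma wInner_eq_sum (pi f g : α → ℝ) : ⟪f, g⟫_[ℝ, pi] = ∑ x, pi x * (f x * g x) :=
  Finset.sum_congr rfl fun x _ => by simp [mul_comm]

lemma wInner_comm (pi f g : α → ℝ) : ⟪f, g⟫_[ℝ, pi] = ⟪g, f⟫_[ℝ, pi] := by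
  simp only [wInner_eq_sum, mul_comm]

lemma wInner_self_nonneg (hpi : ∀ x, 0 ≤ pi x) (f : α → ℝ) : 0 ≤ ⟪f, f⟫_[ℝ, pi] := by
  rw [wInner_eq_sum]
  exact Finset.sum_nonneg fun x _ => mul_nonneg (hpi x) (mul_self_nonneg _)

lemma mul_sq_le_wInner_self (hpi : ∀ x, 0 ≤ pi x) (f : α → ℝ) (x : α) :
    pi x * f x ^ 2 ≤ ⟪f, f⟫_[ℝ, pi] := by
  rw [wInner_eq_sum, sq]
  exact Finset.single_le_sum (f := fun y => pi y * (f y * f y))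
    (fun y _ => mul_nonneg (hpi y) (mul_self_nonneg _)) (Finset.mem_univ x)

lemma eq_zero_of_wInner_self_eq_zero (hpi : ∀ x, 0 < pi x) {f : α → ℝ}
    (hf : ⟪f, f⟫_[ℝ, pi] = 0) : f = 0 := by
  funext x
  have hx : pi x * f x ^ 2 = 0 :=
    le_antisymm (hf ▸ mul_sq_le_wInner_self (fun y => (hpi y).le) f x)
      (mul_nonneg (hpi x).le (sq_nonneg _))
  simpa [(hpi x).ne'] using hx

lemma wInner_one_one (hsum : ∑ x, pi x = 1) : ⟪1, (1 : α → ℝ)⟫_[ℝ, pi] = 1 := by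
  simpa [wInner_eq_sum] using hsum

lemma wInner_sub_smul_one_self (hsum : ∑ x, pi x = 1) (f : α → ℝ) :
    ⟪f - ⟪1, f⟫_[ℝ, pi] • 1, f - ⟪1, f⟫_[ℝ, pi] • 1⟫_[ℝ, pi] =
      ⟪f, f⟫_[ℝ, pi] - ⟪1, f⟫_[ℝ, pi] ^ 2 := by
  simp only [wInner_sub_left, wInner_sub_right, wInner_smul_left, wInner_smul_right,
    wInner_one_one hsum, wInner_comm pi f 1, smul_eq_mul, star_trivial]
  ring

lemma isCompact_wInner_self_eq_one (hpi : ∀ x, 0 < pi x) :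
    IsCompact {f : α → ℝ | ⟪f, f⟫_[ℝ, pi] = 1} := by
  refine IsCompact.of_isClosed_subset
    (isCompact_univ_pi fun x => isCompact_Icc (a := -√(1 / pi x)) (b := √(1 / pi x))) ?_ ?_
  · simp only [wInner_eq_sum]
    exact isClosed_eq (by fun_prop) continuous_const
  · intro f (hf : ⟪f, f⟫_[ℝ, pi] = 1) x _
    refine Set.mem_Icc.2 (abs_le.1 (Real.abs_le_sqrt ?_))
    rw [le_div_iff₀' (hpi x), ← hf]
    exact mul_sq_le_wInner_self (fun y => (hpi y).le) f x

end WeightedInner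

section PiOf

variable {α : Type*} [Fintype α] {pi : α → ℝ}

lemma piOf_pos (hpi : ∀ x, 0 < pi x) {A : Set α} (hA : A.Nonempty) : 0 < piOf pi A := by
  obtain ⟨x, hx⟩ := hA
  exact Finset.sum_pos' (fun y _ => Set.indicator_nonneg (fun z _ => (hpi z).le) y)
    ⟨x, Finset.mem_univ x, by simpa [hx] using hpi x⟩

lemma piOf_nonneg (hpi : ∀ x, 0 ≤ pi x) (A : Set α) : 0 ≤ piOf pi A :=
  Finset.sum_nonneg fun x _ => Set.indicator_nonneg (fun y _ => hpi y) x

lemma sq_wInner_one_le_of_eqOn_zero (hpi : ∀ x, 0 ≤ pi x) {B : Set α} {g : α → ℝ}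
    (hg : ∀ x ∈ B, g x = 0) :
    ⟪1, g⟫_[ℝ, pi] ^ 2 ≤ piOf pi Bᶜ * ⟪g, g⟫_[ℝ, pi] := by
  simp only [wInner_eq_sum, piOf]
  refine Finset.sum_sq_le_sum_mul_sum_of_sq_le_mul _
    (fun x _ => Set.indicator_nonneg (fun y _ => hpi y) x)
    (fun x _ => mul_nonneg (hpi x) (mul_self_nonneg _)) fun x _ => ?_
  by_cases hx : x ∈ B
  · simp [hg x hx]
  · exact le_of_eq (by simp [hx]; ring)

lemma IsReversible.nonneg {P : Matrix α α ℝ} (hrev : IsReversible P pi) (x : α) : 0 ≤ pi x :=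
  (hrev.1 x).le

lemma IsReversible.piOf_compl {P : Matrix α α ℝ} (hrev : IsReversible P pi) (B : Set α) :
    piOf pi Bᶜ = 1 - piOf pi B := by
  simp only [piOf, ← hrev.2.1, ← Finset.sum_sub_distrib, Set.indicator_compl, Pi.sub_apply]

lemma IsReversible.piOf_le_one {P : Matrix α α ℝ} (hrev : IsReversible P pi) (B : Set α) :
    piOf pi B ≤ 1 :=
  sub_nonneg.1 (hrev.piOf_compl B ▸ piOf_nonneg hrev.nonneg Bᶜ)

end PiOf

section Spectral

variable {α : Type*} [Fintype α] {P : Matrix α α ℝ} {pi : α → ℝ}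

lemma IsStochastic.mulVec_one (hP : IsStochastic P) : P *ᵥ 1 = 1 := by
  funext x
  simpa [Matrix.mulVec, dotProduct] using hP.2 x

lemma wInner_mulVec_eq_sum (P : Matrix α α ℝ) (pi f g : α → ℝ) :
    ⟪f, P *ᵥ g⟫_[ℝ, pi] = ∑ x, ∑ y, pi x * P x y * (f x * g y) := by
  simp only [wInner_eq_sum, Matrix.mulVec, dotProduct, Finset.mul_sum]
  exact Finset.sum_congr rfl fun x _ => Finset.sum_congr rfl fun y _ => by ring

lemma IsReversible.wInner_mulVec_comm (hrev : IsReversible P pi) (f g : α → ℝ) :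
    ⟪f, P *ᵥ g⟫_[ℝ, pi] = ⟪g, P *ᵥ f⟫_[ℝ, pi] := by
  rw [wInner_mulVec_eq_sum, wInner_mulVec_eq_sum, Finset.sum_comm]
  refine Finset.sum_congr rfl fun x _ => Finset.sum_congr rfl fun y _ => ?_
  rw [hrev.2.2, mul_comm (f y)]

lemma IsReversible.wInner_one_mulVec (hrev : IsReversible P pi) (hP : IsStochastic P)
    (g : α → ℝ) : ⟪1, P *ᵥ g⟫_[ℝ, pi] = ⟪1, g⟫_[ℝ, pi] := by
  rw [hrev.wInner_mulVec_comm, hP.mulVec_one, wInner_comm]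

-- For `s = 1` and `s = -1` this is twice the Dirichlet form of `P` and of `-P`.
lemma IsReversible.sum_sum_mul_sub_mul_sq (hrev : IsReversible P pi) (hP : IsStochastic P)
    (f : α → ℝ) (s : ℝ) :
    ∑ x, ∑ y, pi x * P x y * (f x - s * f y) ^ 2 =
      (1 + s ^ 2) * ⟪f, f⟫_[ℝ, pi] - 2 * s * ⟪f, P *ᵥ f⟫_[ℝ, pi] := by
  have hrow : ⟪f ^ 2, P *ᵥ 1⟫_[ℝ, pi] = ⟪f, f⟫_[ℝ, pi] := by
    simp [hP.mulVec_one, wInner_eq_sum, sq]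
  have hcol : ⟪1, P *ᵥ f ^ 2⟫_[ℝ, pi] = ⟪f, f⟫_[ℝ, pi] := by
    rw [hrev.wInner_mulVec_comm, hrow]
  calc ∑ x, ∑ y, pi x * P x y * (f x - s * f y) ^ 2
    _ = ⟪f ^ 2, P *ᵥ 1⟫_[ℝ, pi] + s ^ 2 * ⟪1, P *ᵥ f ^ 2⟫_[ℝ, pi]
          - 2 * s * ⟪f, P *ᵥ f⟫_[ℝ, pi] := by
      simp only [wInner_mulVec_eq_sum, Finset.mul_sum, ← Finset.sum_add_distrib,
        ← Finset.sum_sub_distrib, Pi.pow_apply, Pi.one_apply]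
      exact Finset.sum_congr rfl fun x _ => Finset.sum_congr rfl fun y _ => by ring
    _ = (1 + s ^ 2) * ⟪f, f⟫_[ℝ, pi] - 2 * s * ⟪f, P *ᵥ f⟫_[ℝ, pi] := by
      rw [hrow, hcol]
      ring

lemma IsReversible.mul_sq_nonneg (hrev : IsReversible P pi) (hP : IsStochastic P)
    (x y : α) (c : ℝ) : 0 ≤ pi x * P x y * c ^ 2 :=
  mul_nonneg (mul_nonneg (hrev.nonneg x) (hP.1 x y)) (sq_nonneg c)

lemma IsReversible.abs_wInner_mulVec_le (hrev : IsReversible P pi) (hP : IsStochastic P)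
    (f : α → ℝ) : |⟪f, P *ᵥ f⟫_[ℝ, pi]| ≤ ⟪f, f⟫_[ℝ, pi] := by
  have hnonneg (s : ℝ) : 0 ≤ (1 + s ^ 2) * ⟪f, f⟫_[ℝ, pi] - 2 * s * ⟪f, P *ᵥ f⟫_[ℝ, pi] := by
    rw [← hrev.sum_sum_mul_sub_mul_sq hP]
    exact Finset.sum_nonneg fun x _ => Finset.sum_nonneg fun y _ =>
      hrev.mul_sq_nonneg hP x y _
  exact abs_le.2 ⟨by linarith [hnonneg (-1)], by linarith [hnonneg 1]⟩

lemma IsReversible.eq_mul_of_mul_wInner_mulVec_eq (hrev : IsReversible P pi)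
    (hP : IsStochastic P) {f : α → ℝ} {s : ℝ} (hs : s ^ 2 = 1)
    (heq : s * ⟪f, P *ᵥ f⟫_[ℝ, pi] = ⟪f, f⟫_[ℝ, pi]) {x y : α} (hxy : 0 < P x y) :
    f x = s * f y := by
  have hzero : ∑ x, ∑ y, pi x * P x y * (f x - s * f y) ^ 2 = 0 := by
    rw [hrev.sum_sum_mul_sub_mul_sq hP, hs]
    linarith
  rw [Fintype.sum_eq_zero_iff_of_nonneg fun x =>
    Finset.sum_nonneg fun y _ => hrev.mul_sq_nonneg hP x y _] at hzero
  have hrow := congr_fun hzero x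
  rw [Pi.zero_apply, Fintype.sum_eq_zero_iff_of_nonneg fun y =>
    hrev.mul_sq_nonneg hP x y _] at hrow
  have hterm : pi x * P x y * (f x - s * f y) ^ 2 = 0 := congr_fun hrow y
  simpa [(hrev.1 x).ne', hxy.ne', sub_eq_zero] using hterm

lemma eq_pow_mul_of_pow_apply_pos [DecidableEq α] (hP : ∀ x y, 0 ≤ P x y) {f : α → ℝ} {s : ℝ}
    (hedge : ∀ x y, 0 < P x y → f x = s * f y) {t : ℕ} {x y : α} (ht : 0 < (P ^ t) x y) :
    f x = s ^ t * f y := by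
  induction t generalizing x with
  | zero =>
    obtain rfl : x = y := by
      by_contra hne
      simp [hne] at ht
    simp
  | succ t ih =>
    rw [pow_succ', Matrix.mul_apply] at ht
    obtain ⟨z, -, hz⟩ : ∃ z ∈ Finset.univ, 0 < P x z * (P ^ t) z y := by
      by_contra! hle
      exact ht.not_ge (Finset.sum_nonpos hle)
    have hxz : 0 < P x z := (hP x z).lt_of_ne' (left_ne_zero_of_mul hz.ne')
    rw [hedge x z hxz, ih ((pos_iff_pos_of_mul_pos hz).1 hxz), pow_succ', mul_assoc]

lemma IsReversible.abs_wInner_mulVec_lt [DecidableEq α] (hrev : IsReversible P pi)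
    (hP : IsStochastic P) (hirr : IsIrreducible P) (hap : IsAperiodic P) {f : α → ℝ}
    (hf : f ≠ 0) (hmean : ⟪1, f⟫_[ℝ, pi] = 0) :
    |⟪f, P *ᵥ f⟫_[ℝ, pi]| < ⟪f, f⟫_[ℝ, pi] := by
  refine (hrev.abs_wInner_mulVec_le hP f).lt_of_ne fun heq => ?_
  obtain ⟨s, hs, hsf⟩ : ∃ s : ℝ, (s = 1 ∨ s = -1) ∧
      s * ⟪f, P *ᵥ f⟫_[ℝ, pi] = ⟪f, f⟫_[ℝ, pi] := by
    rcases abs_choice ⟪f, P *ᵥ f⟫_[ℝ, pi] with h | h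
    · exact ⟨1, .inl rfl, by rw [one_mul, ← h, heq]⟩
    · exact ⟨-1, .inr rfl, by rw [neg_one_mul, ← h, heq]⟩
  have hpath {t : ℕ} {x y : α} : 0 < (P ^ t) x y → f x = s ^ t * f y :=
    eq_pow_mul_of_pow_apply_pos hP.1 fun x y =>
      hrev.eq_mul_of_mul_wInner_mulVec_eq hP (by rcases hs with rfl | rfl <;> norm_num) hsf
  obtain ⟨x, hx⟩ := Function.ne_iff.1 hf
  -- If `s = 1` then `f` is constant; if `s = -1` then `f` changes sign along every edge, so that
  -- all return times are even.
  rcases hs with rfl | rfl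
  · have hconst : f = f x • 1 := by
      funext y
      obtain ⟨t, ht⟩ := hirr y x
      simpa using hpath ht
    rw [hconst, wInner_smul_right, wInner_one_one hrev.2.1, smul_eq_mul, mul_one] at hmean
    exact hx hmean
  · have heven : ∀ t, 0 < (P ^ t) x x → 2 ∣ t := fun t ht => by
      by_contra hodd
      have hneg := hpath ht
      rw [(Nat.not_even_iff_odd.1 (mt Even.two_dvd hodd)).neg_one_pow] at hneg
      exact hx (by rw [Pi.zero_apply]; linarith)
    exact absurd (hap x 2 heven) (by norm_num)

/-- The unit sphere of the orthogonal complement of the constants in `L²(pi)`, over which `lam`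
takes its supremum. -/
def meanZeroSphere (pi : α → ℝ) : Set (α → ℝ) :=
  {f | ⟪1, f⟫_[ℝ, pi] = 0 ∧ ⟪f, f⟫_[ℝ, pi] = 1}

lemma isCompact_meanZeroSphere (hpi : ∀ x, 0 < pi x) : IsCompact (meanZeroSphere pi) := by
  refine (isCompact_wInner_self_eq_one hpi).inter_left (s := {f | ⟪1, f⟫_[ℝ, pi] = 0}) ?_
  simp only [wInner_eq_sum]
  exact isClosed_eq (by fun_prop) continuous_const

lemma lam_eq_sSup_image (P : Matrix α α ℝ) (pi : α → ℝ) :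
    lam P pi = sSup ((fun f => |⟪f, P *ᵥ f⟫_[ℝ, pi]|) '' meanZeroSphere pi) := by
  rw [lam]
  congr 1
  ext r
  simp [meanZeroSphere, wInner_eq_sum, Matrix.mulVec, dotProduct, sq, and_assoc, eq_comm]

lemma continuous_abs_wInner_mulVec (P : Matrix α α ℝ) (pi : α → ℝ) :
    Continuous fun f : α → ℝ => |⟪f, P *ᵥ f⟫_[ℝ, pi]| := by
  simp only [wInner_mulVec_eq_sum]
  fun_prop

lemma lam_nonneg (P : Matrix α α ℝ) (pi : α → ℝ) : 0 ≤ lam P pi := by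
  rw [lam_eq_sSup_image]
  exact Real.sSup_nonneg (Set.forall_mem_image.2 fun f _ => abs_nonneg _)

lemma IsReversible.lam_le_one (hrev : IsReversible P pi) (hP : IsStochastic P) :
    lam P pi ≤ 1 := by
  rw [lam_eq_sSup_image]
  exact Real.sSup_le (Set.forall_mem_image.2 fun f hf => hf.2 ▸ hrev.abs_wInner_mulVec_le hP f)
    zero_le_one

lemma IsReversible.lam_lt_one [DecidableEq α] (hrev : IsReversible P pi) (hP : IsStochastic P)
    (hirr : IsIrreducible P) (hap : IsAperiodic P) : lam P pi < 1 := by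
  rw [lam_eq_sSup_image]
  rcases (meanZeroSphere pi).eq_empty_or_nonempty with hempty | hne
  · simp [hempty]
  · obtain ⟨f, hf, hmax⟩ := (isCompact_meanZeroSphere hrev.1).exists_sSup_image_eq hne
      (continuous_abs_wInner_mulVec P pi).continuousOn
    have hf0 : f ≠ 0 := by
      rintro rfl
      simpa using hf.2
    rw [hmax, ← hf.2]
    exact hrev.abs_wInner_mulVec_lt hP hirr hap hf0 hf.1

lemma abs_wInner_mulVec_le_lam_mul (hpi : ∀ x, 0 < pi x) (P : Matrix α α ℝ) {f : α → ℝ}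
    (hmean : ⟪1, f⟫_[ℝ, pi] = 0) :
    |⟪f, P *ᵥ f⟫_[ℝ, pi]| ≤ lam P pi * ⟪f, f⟫_[ℝ, pi] := by
  rcases (wInner_self_nonneg (fun x => (hpi x).le) f).eq_or_lt' with hzero | hpos
  · simp [eq_zero_of_wInner_self_eq_zero hpi hzero]
  set N := ⟪f, f⟫_[ℝ, pi] with hN
  have hc : (√N)⁻¹ * (√N)⁻¹ = N⁻¹ := by
    rw [← mul_inv, Real.mul_self_sqrt hpos.le]
  have hmem : (√N)⁻¹ • f ∈ meanZeroSphere pi := by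
    refine ⟨by simp [wInner_smul_right, hmean], ?_⟩
    rw [wInner_smul_left, wInner_smul_right, ← hN, star_trivial, smul_smul, hc, smul_eq_mul,
      inv_mul_cancel₀ hpos.ne']
  have hle : |⟪(√N)⁻¹ • f, P *ᵥ ((√N)⁻¹ • f)⟫_[ℝ, pi]| ≤ lam P pi := by
    rw [lam_eq_sSup_image]
    exact le_csSup ((isCompact_meanZeroSphere hpi).bddAbove_image
      (continuous_abs_wInner_mulVec P pi).continuousOn) (Set.mem_image_of_mem _ hmem)
  rwa [Matrix.mulVec_smul, wInner_smul_left, wInner_smul_right, star_trivial, smul_smul, hc,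
    smul_eq_mul, abs_mul, abs_of_pos (inv_pos.2 hpos), inv_mul_le_iff₀ hpos, mul_comm] at hle

lemma IsReversible.one_sub_lam_mul_piOf_le_one (hrev : IsReversible P pi) (B : Set α) :
    (1 - lam P pi) * piOf pi B ≤ 1 :=
  mul_le_one₀ (by linarith [lam_nonneg P pi]) (piOf_nonneg hrev.nonneg B) (hrev.piOf_le_one B)

end Spectral

section Killed

variable {α : Type*} [Fintype α] {P : Matrix α α ℝ} {pi : α → ℝ}

lemma IsReversible.wInner_sub_smul_one_mulVec (hrev : IsReversible P pi) (hP : IsStochastic P)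
    (f : α → ℝ) :
    ⟪f - ⟪1, f⟫_[ℝ, pi] • 1, P *ᵥ (f - ⟪1, f⟫_[ℝ, pi] • 1)⟫_[ℝ, pi] =
      ⟪f, P *ᵥ f⟫_[ℝ, pi] - ⟪1, f⟫_[ℝ, pi] ^ 2 := by
  simp only [Matrix.mulVec_sub, Matrix.mulVec_smul, hP.mulVec_one, wInner_sub_left,
    wInner_sub_right, wInner_smul_left, wInner_smul_right, hrev.wInner_one_mulVec hP,
    wInner_one_one hrev.2.1, wInner_comm pi f 1, smul_eq_mul, star_trivial]
  ring

lemma IsReversible.abs_wInner_mulVec_le_of_eqOn_zero (hrev : IsReversible P pi)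
    (hP : IsStochastic P) {B : Set α} {g : α → ℝ} (hg : ∀ x ∈ B, g x = 0) :
    |⟪g, P *ᵥ g⟫_[ℝ, pi]| ≤ (1 - (1 - lam P pi) * piOf pi B) * ⟪g, g⟫_[ℝ, pi] := by
  set c := ⟪1, g⟫_[ℝ, pi] with hc
  have hmean : ⟪1, g - c • 1⟫_[ℝ, pi] = 0 := by
    rw [wInner_sub_right, wInner_smul_right, wInner_one_one hrev.2.1, ← hc, smul_eq_mul, mul_one,
      sub_self]
  have hgap := abs_wInner_mulVec_le_lam_mul hrev.1 P hmean
  rw [hrev.wInner_sub_smul_one_mulVec hP, wInner_sub_smul_one_self hrev.2.1, ← hc] at hgap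
  obtain ⟨hlower, hupper⟩ := abs_le.1 hgap
  have hcs : c ^ 2 ≤ (1 - piOf pi B) * ⟪g, g⟫_[ℝ, pi] := by
    rw [← hrev.piOf_compl]
    exact sq_wInner_one_le_of_eqOn_zero hrev.nonneg hg
  have hscaled := mul_le_mul_of_nonneg_left hcs (sub_nonneg.2 (hrev.lam_le_one hP))
  exact abs_le.2 ⟨by linarith [sq_nonneg c], by linarith⟩

lemma IsReversible.sq_wInner_mulVec_le (hrev : IsReversible P pi) {V : Submodule ℝ (α → ℝ)}
    {ρ : ℝ} (hV : ∀ g ∈ V, |⟪g, P *ᵥ g⟫_[ℝ, pi]| ≤ ρ * ⟪g, g⟫_[ℝ, pi]) {f g : α → ℝ}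
    (hf : f ∈ V) (hg : g ∈ V) :
    ⟪f, P *ᵥ g⟫_[ℝ, pi] ^ 2 ≤ ρ ^ 2 * ⟪f, f⟫_[ℝ, pi] * ⟪g, g⟫_[ℝ, pi] := by
  -- Polarisation: subtract the bounds for the quadratic form at `f + t • g` and `f - t • g`.
  have hquad (t : ℝ) : 0 ≤ 2 * ρ * ⟪g, g⟫_[ℝ, pi] * (t * t) + -4 * ⟪f, P *ᵥ g⟫_[ℝ, pi] * t
      + 2 * ρ * ⟪f, f⟫_[ℝ, pi] := by
    have hadd := (abs_le.1 (hV _ (V.add_mem hf (V.smul_mem t hg)))).2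
    have hsub := (abs_le.1 (hV _ (V.sub_mem hf (V.smul_mem t hg)))).1
    simp only [Matrix.mulVec_add, Matrix.mulVec_sub, Matrix.mulVec_smul, wInner_add_left,
      wInner_add_right, wInner_sub_left, wInner_sub_right, wInner_smul_left, wInner_smul_right,
      hrev.wInner_mulVec_comm g f, wInner_comm pi g f, smul_eq_mul, star_trivial] at hadd hsub
    linarith
  have hdiscrim := discrim_le_zero hquad
  rw [discrim] at hdiscrim
  linarith

lemma IsReversible.wInner_indicator_compl_mulVec_self_le (hrev : IsReversible P pi)
    (hP : IsStochastic P) {B : Set α} {g : α → ℝ} (hg : ∀ x ∈ B, g x = 0) :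
    ⟪Bᶜ.indicator (P *ᵥ g), Bᶜ.indicator (P *ᵥ g)⟫_[ℝ, pi] ≤
      (1 - (1 - lam P pi) * piOf pi B) ^ 2 * ⟪g, g⟫_[ℝ, pi] := by
  set f := Bᶜ.indicator (P *ᵥ g) with hf
  have hself : ⟪f, P *ᵥ g⟫_[ℝ, pi] = ⟪f, f⟫_[ℝ, pi] := by
    simp only [wInner_eq_sum]
    refine Finset.sum_congr rfl fun x _ => ?_
    by_cases hx : x ∈ B <;> simp [hf, hx]
  have hbound := hrev.sq_wInner_mulVec_le (V := Submodule.pi B fun _ => ⊥) (f := f) (g := g)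
    (fun h hh => hrev.abs_wInner_mulVec_le_of_eqOn_zero hP hh)
    (fun x hx => by simp [hf, hx]) hg
  rw [hself, sq, mul_right_comm] at hbound
  rcases (wInner_self_nonneg hrev.nonneg f).eq_or_lt' with hzero | hpos
  · rw [hzero]
    exact mul_nonneg (sq_nonneg _) (wInner_self_nonneg hrev.nonneg g)
  · exact le_of_mul_le_mul_right hbound hpos

end Killed

section PathSpace

variable {α : Type*}

/-- The time shift `(ω₀, ω₁, …) ↦ (ω₁, ω₂, …)` on trajectories. -/
def shift (ω : ℕ → α) : ℕ → α := fun n => ω (n + 1)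

lemma hit_lt_hit_subset (A B : Set α) (s : ℕ) :
    {ω | hit A ω < hit B ω} ⊆
      (⋃ n ∈ Finset.range s, {ω | ω n ∈ A}) ∪ {ω | ∀ n ≤ s, ω n ∉ B} := by
  intro ω hω
  by_contra! hcon
  simp only [Set.mem_union, Set.mem_iUnion, Finset.mem_range, Set.mem_ofPred_eq, exists_prop,
    not_or, not_exists, not_and, not_forall, not_not] at hcon
  obtain ⟨hA, n, hn, hnB⟩ := hcon
  have hsA : (s : ℕ∞) ≤ hit A ω := by
    refine le_sInf (Set.forall_mem_image.2 fun m hm => ?_)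
    exact Nat.cast_le.2 (not_lt.1 fun hlt => hA m hlt hm)
  have hBs : hit B ω ≤ s :=
    (sInf_le (Set.mem_image_of_mem Nat.cast hnB)).trans (Nat.cast_le.2 hn)
  exact (hBs.trans hsA).not_gt hω

variable [MeasurableSpace α]

lemma measurable_shift : Measurable (shift : (ℕ → α) → ℕ → α) :=
  measurable_pi_lambda _ fun n => measurable_pi_apply (n + 1)

lemma measurableSet_apply_mem {S : Set α} (hS : MeasurableSet S) (n : ℕ) :
    MeasurableSet {ω : ℕ → α | ω n ∈ S} :=
  measurable_pi_apply n hS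

lemma measurableSet_forall_le_notMem {B : Set α} (hB : MeasurableSet B) (s : ℕ) :
    MeasurableSet {ω : ℕ → α | ∀ n ≤ s, ω n ∉ B} := by
  simp only [Set.ofPred_forall]
  exact .iInter fun n => .iInter fun _ => measurableSet_apply_mem hB.compl n

lemma measurableSet_cylinder [MeasurableSingletonClass α] (t : ℕ) (w : ℕ → α) :
    MeasurableSet {ω : ℕ → α | ∀ i ≤ t, ω i = w i} := by
  simp only [Set.ofPred_forall]
  exact .iInter fun i => .iInter fun _ => measurableSet_apply_mem (measurableSet_singleton (w i)) i

lemma ext_of_measure_cylinder [Countable α] [MeasurableSingletonClass α]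
    {ν ν' : Measure (ℕ → α)} [IsFiniteMeasure ν']
    (h : ∀ (t : ℕ) (w : ℕ → α), ν {ω | ∀ i ≤ t, ω i = w i} = ν' {ω | ∀ i ≤ t, ω i = w i}) :
    ν = ν' := by
  have hmarginal (t : ℕ) :
      ν.map (Preorder.frestrictLe t) = ν'.map (Preorder.frestrictLe t) := by
    refine Measure.ext_iff_singleton.2 fun v => ?_
    have hmeas := Preorder.measurable_frestrictLe (X := fun _ => α) t
    rw [Measure.map_apply hmeas (measurableSet_singleton v),
      Measure.map_apply hmeas (measurableSet_singleton v)]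
    rcases (Preorder.frestrictLe (π := fun _ => α) t ⁻¹' {v}).eq_empty_or_nonempty with
      hempty | ⟨w, rfl⟩
    · rw [hempty, measure_empty, measure_empty]
    · convert h t w using 2 <;> ext ω <;> simp [funext_iff]
  refine IsProjectiveLimit.unique (P := fun I => ν'.map I.restrict) (fun I => ?_) fun _ => rfl
  change ν.map I.restrict = ν'.map I.restrict
  have hfactor : I.restrict (π := fun _ => α) =
      Finset.restrict₂ I.subset_Iic_sup_id ∘ Preorder.frestrictLe (I.sup id) := rfl
  rw [hfactor, ← Measure.map_map (by fun_prop) (by fun_prop), hmarginal,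
    Measure.map_map (by fun_prop) (by fun_prop)]

end PathSpace

section Law

variable {α : Type*} [Fintype α] [MeasurableSpace α] {μ : α → Measure (ℕ → α)}

/-- The law `∑ x, c x • μ x` of the chain with initial distribution `c`, where `μ x` is the law
of the chain started at `x`. -/
noncomputable def lawFrom (μ : α → Measure (ℕ → α)) (c : α → ℝ) : Measure (ℕ → α) :=
  ∑ x, ENNReal.ofReal (c x) • μ x

lemma lawFrom_apply (μ : α → Measure (ℕ → α)) (c : α → ℝ) (E : Set (ℕ → α)) :
    lawFrom μ c E = ∑ x, ENNReal.ofReal (c x) * μ x E := by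
  simp [lawFrom]

instance isFiniteMeasure_lawFrom [∀ x, IsFiniteMeasure (μ x)] (c : α → ℝ) :
    IsFiniteMeasure (lawFrom μ c) := by
  refine ⟨?_⟩
  rw [lawFrom_apply]
  exact ENNReal.sum_lt_top.2 fun x _ => ENNReal.mul_lt_top ENNReal.ofReal_lt_top
    (measure_lt_top _ _)

lemma real_lawFrom [∀ x, IsFiniteMeasure (μ x)] {c : α → ℝ} (hc : ∀ x, 0 ≤ c x)
    (E : Set (ℕ → α)) : (lawFrom μ c).real E = ∑ x, c x * (μ x).real E := by
  rw [measureReal_def, lawFrom_apply, ENNReal.toReal_sum fun x _ =>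
    ENNReal.mul_ne_top ENNReal.ofReal_ne_top (measure_ne_top _ _)]
  simp [ENNReal.toReal_ofReal, hc, measureReal_def]

end Law

section InitialState

variable {α : Type*} [DecidableEq α] [MeasurableSpace α] [MeasurableSingletonClass α]
  {P : Matrix α α ℝ} {μ : α → Measure (ℕ → α)}

lemma IsMarkovChain.ae_apply_zero_eq (hμ : IsMarkovChain P μ) (x : α) :
    ∀ᵐ ω ∂μ x, ω 0 = x := by
  have := hμ.1 x
  refine (prob_compl_eq_zero_iff (measurableSet_apply_mem (measurableSet_singleton x) 0)).2 ?_
  simpa using hμ.2 x 0 fun _ => x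

lemma IsMarkovChain.ae_eq_set (hμ : IsMarkovChain P μ) {x : α} {E F : Set (ℕ → α)}
    (h : ∀ ω, ω 0 = x → (ω ∈ E ↔ ω ∈ F)) : E =ᵐ[μ x] F :=
  (hμ.ae_apply_zero_eq x).mono fun ω hω => propext (h ω hω)

lemma IsMarkovChain.real_apply_zero_mem (hμ : IsMarkovChain P μ) (S : Set α) (x : α) :
    (μ x).real {ω | ω 0 ∈ S} = S.indicator 1 x := by
  have := hμ.1
  by_cases hx : x ∈ S
  · have hae : {ω | ω 0 ∈ S} =ᵐ[μ x] Set.univ := hμ.ae_eq_set fun ω hω => by simp [hω, hx]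
    simp [measureReal_congr hae, hx]
  · have hae : {ω | ω 0 ∈ S} =ᵐ[μ x] (∅ : Set (ℕ → α)) :=
      hμ.ae_eq_set fun ω hω => by simp [hω, hx]
    simp [measureReal_congr hae, hx]

/-- The probability, starting from a given state, that the chain avoids `B` up to time `n`. -/
noncomputable def survival (μ : α → Measure (ℕ → α)) (B : Set α) (n : ℕ) (x : α) : ℝ :=
  (μ x).real {ω | ∀ i ≤ n, ω i ∉ B}

lemma IsMarkovChain.survival_eq_zero_of_mem (hμ : IsMarkovChain P μ) {B : Set α} (n : ℕ) :
    ∀ x ∈ B, survival μ B n x = 0 := by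
  intro x hx
  have hae : {ω | ∀ i ≤ n, ω i ∉ B} =ᵐ[μ x] (∅ : Set (ℕ → α)) :=
    hμ.ae_eq_set fun ω hω => iff_of_false (fun h => h 0 (Nat.zero_le _) (by rwa [hω])) id
  rw [survival, measureReal_congr hae, measureReal_empty]

lemma IsMarkovChain.survival_zero (hμ : IsMarkovChain P μ) (B : Set α) :
    survival μ B 0 = Bᶜ.indicator 1 := by
  funext x
  simpa [survival] using hμ.real_apply_zero_mem Bᶜ x

end InitialState

section MarkovChain

variable {α : Type*} [Fintype α] [DecidableEq α] [MeasurableSpace α] [MeasurableSingletonClass α]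
  {P : Matrix α α ℝ} {pi : α → ℝ} {μ : α → Measure (ℕ → α)}

lemma IsMarkovChain.map_shift (hμ : IsMarkovChain P μ) (hP : IsStochastic P) (x : α) :
    (μ x).map shift = lawFrom μ (P x) := by
  have := hμ.1
  refine ext_of_measure_cylinder fun t w => ?_
  obtain ⟨xw, hzero, hsucc⟩ : ∃ xw : ℕ → α, xw 0 = x ∧ ∀ i, xw (i + 1) = w i :=
    ⟨fun i => i.casesOn x w, rfl, fun _ => rfl⟩
  have hcons : shift ⁻¹' {ω | ∀ i ≤ t, ω i = w i} =ᵐ[μ x] {ω | ∀ i ≤ t + 1, ω i = xw i} := by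
    refine hμ.ae_eq_set fun ω hω => ⟨fun h i hi => ?_, fun h i hi => ?_⟩
    · cases i with
      | zero => rw [hω, hzero]
      | succ i => exact (h i (by omega)).trans (hsucc i).symm
    · exact (h (i + 1) (by omega)).trans (hsucc i)
  have hprod : ∏ i ∈ Finset.range (t + 1), P (xw i) (xw (i + 1)) =
      P x (w 0) * ∏ i ∈ Finset.range t, P (w i) (w (i + 1)) := by
    simp only [Finset.prod_range_succ', hsucc, hzero, mul_comm]
  rw [Measure.map_apply measurable_shift (measurableSet_cylinder t w), measure_congr hcons,
    hμ.2 x, lawFrom_apply, Finset.sum_eq_single (w 0)]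
  · rw [hμ.2, if_pos hzero, if_pos rfl, one_mul, one_mul, hprod, ENNReal.ofReal_mul (hP.1 x _)]
  · intro y _ hy
    rw [hμ.2, if_neg hy.symm, zero_mul, ENNReal.ofReal_zero, mul_zero]
  · exact fun h => absurd (Finset.mem_univ _) h

lemma IsMarkovChain.real_preimage_shift (hμ : IsMarkovChain P μ) (hP : IsStochastic P)
    {E : Set (ℕ → α)} (hE : MeasurableSet E) (x : α) :
    (μ x).real (shift ⁻¹' E) = (P *ᵥ fun y => (μ y).real E) x := by
  have := hμ.1
  rw [← map_measureReal_apply measurable_shift hE, hμ.map_shift hP, real_lawFrom (hP.1 x)]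
  rfl

lemma IsMarkovChain.real_lawFrom_preimage_shift (hμ : IsMarkovChain P μ) (hP : IsStochastic P)
    (hrev : IsReversible P pi) {E : Set (ℕ → α)} (hE : MeasurableSet E) :
    (lawFrom μ pi).real (shift ⁻¹' E) = (lawFrom μ pi).real E := by
  have := hμ.1
  have hstat := hrev.wInner_one_mulVec hP fun y => (μ y).real E
  rw [real_lawFrom hrev.nonneg, real_lawFrom hrev.nonneg]
  simpa only [hμ.real_preimage_shift hP hE, wInner_eq_sum, Pi.one_apply, one_mul] using hstat

lemma IsMarkovChain.real_lawFrom_apply_mem (hμ : IsMarkovChain P μ) (hP : IsStochastic P)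
    (hrev : IsReversible P pi) (A : Set α) (n : ℕ) :
    (lawFrom μ pi).real {ω | ω n ∈ A} = piOf pi A := by
  have := hμ.1
  induction n with
  | zero =>
    rw [real_lawFrom hrev.nonneg, piOf]
    refine Finset.sum_congr rfl fun x _ => ?_
    by_cases hx : x ∈ A <;> simp [hμ.real_apply_zero_mem, hx]
  | succ n ih =>
    rw [← ih]
    exact hμ.real_lawFrom_preimage_shift hP hrev
      (measurableSet_apply_mem A.to_countable.measurableSet n)

lemma IsMarkovChain.survival_succ (hμ : IsMarkovChain P μ) (hP : IsStochastic P) (B : Set α)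
    (n : ℕ) : survival μ B (n + 1) = Bᶜ.indicator (P *ᵥ survival μ B n) := by
  funext x
  have := hμ.1 x
  by_cases hx : x ∈ B
  · simp [hμ.survival_eq_zero_of_mem, hx]
  · have hae : {ω | ∀ i ≤ n + 1, ω i ∉ B} =ᵐ[μ x] shift ⁻¹' {ω | ∀ i ≤ n, ω i ∉ B} := by
      refine hμ.ae_eq_set fun ω hω => ⟨fun h i hi => h (i + 1) (by omega), fun h i hi => ?_⟩
      cases i with
      | zero => rwa [hω]
      | succ i => exact h i (by omega)
    rw [Set.indicator_of_mem hx, survival, measureReal_congr hae,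
      hμ.real_preimage_shift hP
        (measurableSet_forall_le_notMem B.to_countable.measurableSet n)]
    rfl

lemma IsMarkovChain.wInner_survival_self_le (hμ : IsMarkovChain P μ) (hP : IsStochastic P)
    (hrev : IsReversible P pi) (B : Set α) (n : ℕ) :
    ⟪survival μ B n, survival μ B n⟫_[ℝ, pi] ≤
      ((1 - (1 - lam P pi) * piOf pi B) ^ n) ^ 2 * piOf pi Bᶜ := by
  induction n with
  | zero =>
    rw [hμ.survival_zero, pow_zero, one_pow, one_mul, wInner_eq_sum, piOf]
    refine Finset.sum_le_sum fun x _ => le_of_eq ?_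
    by_cases hx : x ∈ B <;> simp [hx]
  | succ n ih =>
    rw [hμ.survival_succ hP]
    calc _ ≤ (1 - (1 - lam P pi) * piOf pi B) ^ 2 * ⟪survival μ B n, survival μ B n⟫_[ℝ, pi] :=
          hrev.wInner_indicator_compl_mulVec_self_le hP (hμ.survival_eq_zero_of_mem n)
      _ ≤ _ := mul_le_mul_of_nonneg_left ih (sq_nonneg _)
      _ = _ := by ring

lemma IsMarkovChain.real_lawFrom_forall_le_notMem_le (hμ : IsMarkovChain P μ)
    (hP : IsStochastic P) (hrev : IsReversible P pi) (B : Set α) (n : ℕ) :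
    (lawFrom μ pi).real {ω | ∀ i ≤ n, ω i ∉ B} ≤
      (1 - (1 - lam P pi) * piOf pi B) ^ n * piOf pi Bᶜ := by
  have := hμ.1
  have heq : (lawFrom μ pi).real {ω | ∀ i ≤ n, ω i ∉ B} = ⟪1, survival μ B n⟫_[ℝ, pi] := by
    simp only [real_lawFrom hrev.nonneg, wInner_eq_sum, Pi.one_apply, one_mul, survival]
  have hcompl := piOf_nonneg hrev.nonneg Bᶜ
  have hpow : 0 ≤ (1 - (1 - lam P pi) * piOf pi B) ^ n :=
    pow_nonneg (sub_nonneg.2 (hrev.one_sub_lam_mul_piOf_le_one B)) n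
  rw [heq]
  refine le_of_abs_le (abs_le_of_sq_le_sq ?_ (mul_nonneg hpow hcompl))
  calc ⟪1, survival μ B n⟫_[ℝ, pi] ^ 2
    _ ≤ piOf pi Bᶜ * ⟪survival μ B n, survival μ B n⟫_[ℝ, pi] :=
      sq_wInner_one_le_of_eqOn_zero hrev.nonneg (hμ.survival_eq_zero_of_mem n)
    _ ≤ piOf pi Bᶜ * (((1 - (1 - lam P pi) * piOf pi B) ^ n) ^ 2 * piOf pi Bᶜ) :=
      mul_le_mul_of_nonneg_left (hμ.wInner_survival_self_le hP hrev B n) hcompl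
    _ = _ := by ring

lemma IsMarkovChain.real_lawFrom_hit_lt_hit_le (hμ : IsMarkovChain P μ) (hP : IsStochastic P)
    (hrev : IsReversible P pi) (A B : Set α) (s : ℕ) :
    (lawFrom μ pi).real {ω | hit A ω < hit B ω} ≤
      s * piOf pi A + (1 - (1 - lam P pi) * piOf pi B) ^ s * piOf pi Bᶜ := by
  have := hμ.1
  calc (lawFrom μ pi).real {ω | hit A ω < hit B ω}
    _ ≤ (lawFrom μ pi).real ((⋃ n ∈ Finset.range s, {ω | ω n ∈ A}) ∪ {ω | ∀ n ≤ s, ω n ∉ B}) :=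
      measureReal_mono (hit_lt_hit_subset A B s)
    _ ≤ ∑ n ∈ Finset.range s, (lawFrom μ pi).real {ω | ω n ∈ A} +
          (lawFrom μ pi).real {ω | ∀ n ≤ s, ω n ∉ B} :=
      (measureReal_union_le _ _).trans
        (add_le_add_left (measureReal_biUnion_finset_le _ _) _)
    _ ≤ _ := by
      refine add_le_add (le_of_eq ?_) (hμ.real_lawFrom_forall_le_notMem_le hP hrev B s)
      simp [hμ.real_lawFrom_apply_mem hP hrev]

end MarkovChain

lemma exists_nat_pow_one_sub_le {c ε : ℝ} (hc : 0 < c) (hc' : c ≤ 1) (hε : 0 < ε) (hε' : ε ≤ 1) :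
    ∃ s : ℕ, (s : ℝ) ≤ Real.log ε⁻¹ / c + 1 ∧ (1 - c) ^ s ≤ ε := by
  have hlog : 0 ≤ Real.log ε⁻¹ / c := div_nonneg (Real.log_nonneg ((one_le_inv₀ hε).2 hε')) hc.le
  refine ⟨⌈Real.log ε⁻¹ / c⌉₊, (Nat.ceil_lt_add_one hlog).le, ?_⟩
  calc (1 - c) ^ ⌈Real.log ε⁻¹ / c⌉₊
    _ ≤ Real.exp (-c) ^ ⌈Real.log ε⁻¹ / c⌉₊ :=
      pow_le_pow_left₀ (sub_nonneg.2 hc') (Real.one_sub_le_exp_neg c) _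
    _ = Real.exp (-(c * ⌈Real.log ε⁻¹ / c⌉₊)) := by
      rw [← Real.exp_nat_mul]
      ring_nf
    _ ≤ Real.exp (-Real.log ε⁻¹) :=
      Real.exp_le_exp.2 (neg_le_neg ((div_le_iff₀' hc).1 (Nat.le_ceil _)))
    _ = ε := by rw [Real.log_inv, neg_neg, Real.exp_log hε]

lemma one_div_mul_log_add_le_two_div_mul_log_add {a b c : ℝ} (hc : 0 < c) (ha : 0 < a)
    (hab : a ≤ b) :
    1 / c * (a / b) * Real.log (b / a) + a / b ≤
      2 / c * (a / b) * Real.log (b / a) + a + a / b := by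
  have hb : 0 < b := ha.trans_le hab
  have hlog : 0 ≤ Real.log (b / a) := Real.log_nonneg ((one_le_div ha).2 hab)
  refine add_le_add_left (le_add_of_le_of_nonneg ?_ ha.le) _
  gcongr
  exact one_le_two

theorem stmt12_general {α : Type*} [Fintype α] [DecidableEq α] [MeasurableSpace α]
    [MeasurableSingletonClass α] {P : Matrix α α ℝ} {pi : α → ℝ} {μ : α → Measure (ℕ → α)}
    (hP : IsStochastic P) (hgap : lam P pi < 1) (hrev : IsReversible P pi)
    (hμ : IsMarkovChain P μ) {A B : Set α} (hA : A.Nonempty) (hle : piOf pi A ≤ piOf pi B) :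
    ∑ y, pi y * (μ y {ω | hit A ω < hit B ω}).toReal ≤
      1 / (1 - lam P pi) * (piOf pi A / piOf pi B) * Real.log (piOf pi B / piOf pi A)
        + piOf pi A / piOf pi B := by
  have := hμ.1
  have hApos : 0 < piOf pi A := piOf_pos hrev.1 hA
  have hBpos : 0 < piOf pi B := hApos.trans_le hle
  obtain ⟨s, hs, hpow⟩ := exists_nat_pow_one_sub_le (mul_pos (sub_pos.2 hgap) hBpos)
    (hrev.one_sub_lam_mul_piOf_le_one B) (div_pos hApos hBpos) ((div_le_one hBpos).2 hle)
  rw [inv_div] at hs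
  calc ∑ y, pi y * (μ y {ω | hit A ω < hit B ω}).toReal
    _ = (lawFrom μ pi).real {ω | hit A ω < hit B ω} :=
      (real_lawFrom hrev.nonneg _).symm
    _ ≤ s * piOf pi A + (1 - (1 - lam P pi) * piOf pi B) ^ s * piOf pi Bᶜ :=
      hμ.real_lawFrom_hit_lt_hit_le hP hrev A B s
    _ ≤ (Real.log (piOf pi B / piOf pi A) / ((1 - lam P pi) * piOf pi B) + 1) * piOf pi A
          + piOf pi A / piOf pi B * piOf pi Bᶜ :=
      add_le_add (mul_le_mul_of_nonneg_right hs hApos.le)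
        (mul_le_mul_of_nonneg_right hpow (piOf_nonneg hrev.nonneg _))
    _ = _ := by
      rw [hrev.piOf_compl]
      field_simp [(sub_pos.2 hgap).ne']
      ring

/-- For disjoint nonempty `A, B ⊆ G` with `π(A) < π(B)`,
`Pr_π[T_A < T_B] ≤ (2/(1−λ))·(π(A)/π(B))·log(π(B)/π(A)) + π(A) + π(A)/π(B)`. -/
theorem stmt12 {G : Type*} [Fintype G] [DecidableEq G] [MeasurableSpace G] [MeasurableSingletonClass G]
    (P : Matrix G G ℝ) (pi : G → ℝ) (μ : G → Measure (ℕ → G))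
    (hP : IsStochastic P) (hirr : IsIrreducible P) (hap : IsAperiodic P)
    (hrev : IsReversible P pi) (hμ : IsMarkovChain P μ)
    (A B : Set G) (hA : A.Nonempty) (hB : B.Nonempty) (hdisj : Disjoint A B)
    (hlt : piOf pi A < piOf pi B) :
    ∑ y, pi y * (μ y {ω | hit A ω < hit B ω}).toReal ≤
      2 / (1 - lam P pi) * (piOf pi A / piOf pi B) *
          Real.log (piOf pi B / piOf pi A)
        + piOf pi A + piOf pi A / piOf pi B := by
  have hgap : lam P pi < 1 := hrev.lam_lt_one hP hirr hap
  exact (stmt12_general hP hgap hrev hμ hA hlt.le).trans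
    (one_div_mul_log_add_le_two_div_mul_log_add (sub_pos.2 hgap) (piOf_pos hrev.1 hA) hlt.le)

end HM
end
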